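/- arXiv:1709.01296 — 3 statements merged into one kernel-verified Lean document; each statement's English description precedes it below -/
import Mathlib

section
/- The extreme points of J are exactly the n! points v_σ indexed by permutations σ of {1, …, n}, where v_σ is defined by (v_σ)_{σ(k)} = c_k − c_{k−1} for k = 1, …, n. In particular J has exactly one vertex for each ordering of the petals of the rose (this is the rose case of Proposition 2.1 and Corollary 2.2 of the paper: the jewel of a marked rose is a permutohedron whose vertices are the orderings of its petals). -/
/-- The jewel of an `n`-petaled rose: the standard simplex in `ℝ^n` truncated by
`∑_{i ∈ A} x i ≥ c |A|` for every nonempty proper subset `A` of the petals. -/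
def roseJewel (n : ℕ) (c : ℕ → ℝ) : Set (Fin n → ℝ) :=
  {x | (∀ i, 0 ≤ x i) ∧ (∑ i, x i = 1) ∧
    ∀ A : Finset (Fin n), A.Nonempty → A ≠ Finset.univ → c A.card ≤ ∑ i ∈ A, x i}

/-- The candidate vertex associated to an ordering `σ` of the petals:
`(v_σ)_{σ(k)} = c (k+1) - c k` (paper's `c_k - c_{k-1}` for `k = 1, …, n`). -/
noncomputable def roseVertex (n : ℕ) (c : ℕ → ℝ) (σ : Equiv.Perm (Fin n)) :
    Fin n → ℝ :=
  fun i => c ((σ.symm i : ℕ) + 1) - c (σ.symm i : ℕ)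

/-!
The jewel is the base polytope (the core) of the set function `f A = c |A|`, and `f` is supermodular
because the gaps `c (k + 1) - c k` increase. So the theorem is an instance of the Edmonds–Shapley
description of the vertices of a base polytope.

Call `A` tight at `x` if `∑ i ∈ A, x i = f A`. A point of the polytope at which all the initial
segments of an ordering are tight is determined by the ordering, and it is extreme because tightness
at an interior point of a segment in the polytope passes to the ends of the segment. Conversely, by
supermodularity the tight sets at `x` form a lattice. If `x` is extreme, this lattice separates the
elements of the ground set, since otherwise a little mass could be moved between two of them in
both directions. The least tight sets containing the various elements then define a partial order,
and all the initial segments of any linear extension of it are tight.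
-/

open Finset

section InitialSegment

variable {ι : Type*} [Fintype ι] {n : ℕ}

/-- The first `k` elements of `ι` in the ordering `σ`, counted from `0`; all of `ι` if `n ≤ k`. -/
def initialSegment (σ : Fin n ≃ ι) (k : ℕ) : Finset ι := {i | (σ.symm i : ℕ) < k}

@[simp]
lemma mem_initialSegment {σ : Fin n ≃ ι} {k : ℕ} {i : ι} :
    i ∈ initialSegment σ k ↔ (σ.symm i : ℕ) < k := by
  simp [initialSegment]

lemma initialSegment_self (σ : Fin n ≃ ι) : initialSegment σ n = univ := by
  ext i
  simp

lemma initialSegment_add_one [DecidableEq ι] (σ : Fin n ≃ ι) (i : ι) :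
    initialSegment σ (σ.symm i + 1) = insert i (initialSegment σ (σ.symm i)) := by
  ext j
  simp [le_iff_eq_or_lt, Fin.val_inj]

lemma sum_initialSegment {M : Type*} [AddCommMonoid M] (σ : Fin n ≃ ι) {k : ℕ} (hk : k ≤ n)
    (g : ℕ → M) : ∑ i ∈ initialSegment σ k, g (σ.symm i) = ∑ m ∈ range k, g m := by
  refine sum_bij (fun i _ => σ.symm i) (by simp) (by simp [Fin.val_inj]) (fun m hm => ?_) (by simp)
  have hmk : m < k := mem_range.1 hm
  exact ⟨σ ⟨m, hmk.trans_le hk⟩, by simpa using hmk, by simp⟩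

lemma card_initialSegment (σ : Fin n ≃ ι) {k : ℕ} (hk : k ≤ n) : #(initialSegment σ k) = k := by
  rw [card_eq_sum_ones, sum_initialSegment σ hk fun _ => 1, ← card_eq_sum_ones, card_range]

end InitialSegment

section Sublattice

variable {ι : Type*} [Fintype ι]

lemma exists_equiv_fin_monotone_symm [PartialOrder ι] {n : ℕ} (hn : Fintype.card ι = n) :
    ∃ σ : Fin n ≃ ι, Monotone σ.symm := by
  let _ : Fintype (LinearExtension ι) := ‹Fintype ι›
  let e : Fin n ≃o LinearExtension ι := Fintype.orderIsoFinOfCardEq (LinearExtension ι) hn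
  exact ⟨e.toEquiv, e.symm.monotone.comp toLinearExtension.monotone⟩

variable [DecidableEq ι] {L : Sublattice (Finset ι)}

lemma exists_isLeast_mem_sublattice (huniv : univ ∈ L) (i : ι) :
    ∃ A, IsLeast {A | A ∈ L ∧ i ∈ A} A := by
  classical
  refine ⟨({A | A ∈ L ∧ i ∈ A} : Finset (Finset ι)).inf id, ?_, fun B hB => ?_⟩
  · refine inf_mem {A | A ∈ L ∧ i ∈ A} ⟨huniv, mem_univ i⟩ (fun A hA B hB => ?_) _ _ (by simp)
    exact ⟨L.infClosed hA.1 hB.1, mem_inter.2 ⟨hA.2, hB.2⟩⟩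
  · exact inf_le (f := id) (by simpa using hB)

theorem exists_forall_initialSegment_mem_sublattice {n : ℕ} (hn : Fintype.card ι = n)
    (hempty : ∅ ∈ L) (huniv : univ ∈ L)
    (hsep : ∀ i j, (∀ A ∈ L, i ∈ A ↔ j ∈ A) → i = j) :
    ∃ σ : Fin n ≃ ι, ∀ k, initialSegment σ k ∈ L := by
  choose M hM using exists_isLeast_mem_sublattice huniv
  have mem_M_self (i : ι) : i ∈ M i := (hM i).1.2
  have M_subset {i : ι} {A : Finset ι} (hA : A ∈ L) (hi : i ∈ A) : M i ⊆ A := (hM i).2 ⟨hA, hi⟩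
  have M_injective : Function.Injective M := fun i j hij => hsep i j fun A hA =>
    ⟨fun hi => M_subset hA hi (hij ▸ mem_M_self j), fun hj => M_subset hA hj (hij ▸ mem_M_self i)⟩
  let _ : PartialOrder ι := PartialOrder.lift M M_injective
  obtain ⟨σ, hσ⟩ := exists_equiv_fin_monotone_symm hn
  refine ⟨σ, fun k => ?_⟩
  have eq_sup : initialSegment σ k = (initialSegment σ k).sup M := by
    refine le_antisymm (fun i hi => mem_sup.2 ⟨i, hi, mem_M_self i⟩) (Finset.sup_le ?_)
    intro j hj i hi
    have hij : σ.symm i ≤ σ.symm j := hσ (M_subset (hM j).1.1 hi)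
    exact mem_initialSegment.2 (lt_of_le_of_lt hij (mem_initialSegment.1 hj))
  rw [eq_sup]
  exact sup_mem (L : Set (Finset ι)) hempty (fun _ hA _ hB => L.supClosed hA hB) _ _
    fun i _ => (hM i).1.1

end Sublattice

section MarginalVector

/-- The set `A` is tight at `x`: the inequality `f A ≤ ∑ i ∈ A, x i`, which `basePolytope f`
attaches to `A`, is an equality. -/
def IsTight {ι M : Type*} [AddCommMonoid M] (f : Finset ι → M) (x : ι → M) (A : Finset ι) : Prop :=
  ∑ i ∈ A, x i = f A

variable {ι G : Type*} [Fintype ι] [AddCommGroup G] {f : Finset ι → G} {x : ι → G} {n : ℕ}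

/-- The marginal vector of `f` at the ordering `σ`: its coordinate at `i` is the increase of `f`
when `i` is added to the set of its predecessors. -/
def marginalVector (f : Finset ι → G) (σ : Fin n ≃ ι) : ι → G :=
  fun i => f (initialSegment σ (σ.symm i + 1)) - f (initialSegment σ (σ.symm i))

lemma eq_marginalVector_of_isTight {σ : Fin n ≃ ι}
    (hx : ∀ k ≤ n, IsTight f x (initialSegment σ k)) : x = marginalVector f σ := by
  classical
  funext i
  have hbefore := hx (σ.symm i) (σ.symm i).isLt.le
  have hafter := hx (σ.symm i + 1) (σ.symm i).isLt
  have hsum : ∑ j ∈ initialSegment σ (σ.symm i + 1), x j =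
      x i + ∑ j ∈ initialSegment σ (σ.symm i), x j := by
    rw [initialSegment_add_one, sum_insert (by simp)]
  rw [marginalVector, ← hbefore, ← hafter, hsum, add_sub_cancel_right]

lemma isTight_marginalVector (hempty : f ∅ = 0) (σ : Fin n ≃ ι) {k : ℕ} (hk : k ≤ n) :
    IsTight f (marginalVector f σ) (initialSegment σ k) := by
  have hzero : initialSegment σ 0 = ∅ := by simp [initialSegment]
  calc ∑ i ∈ initialSegment σ k, marginalVector f σ i
      = ∑ m ∈ range k, (f (initialSegment σ (m + 1)) - f (initialSegment σ m)) :=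
        sum_initialSegment σ hk fun m => f (initialSegment σ (m + 1)) - f (initialSegment σ m)
    _ = f (initialSegment σ k) := by
        rw [sum_range_sub fun m => f (initialSegment σ m), hzero, hempty, sub_zero]

end MarginalVector

section BasePolytope

/-- The base polytope of a set function `f`: the points `x` of total mass `f univ` that give every
set `A` a mass of at least `f A`. In game-theoretic terms, the core of the game `f`. -/
def basePolytope {ι G : Type*} [Fintype ι] [AddCommMonoid G] [LE G] (f : Finset ι → G) :
    Set (ι → G) :=
  {x | ∑ i, x i = f univ ∧ ∀ A, f A ≤ ∑ i ∈ A, x i}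

/-- A supermodular set function; in game-theoretic terms, a convex game. -/
def Supermodular {ι G : Type*} [DecidableEq ι] [Add G] [LE G] (f : Finset ι → G) : Prop :=
  ∀ A B, f A + f B ≤ f (A ∪ B) + f (A ∩ B)

variable {ι G : Type*} [Fintype ι] [DecidableEq ι] [AddCommGroup G] [PartialOrder G]
  [IsOrderedAddMonoid G] {f : Finset ι → G} {x : ι → G} {n : ℕ}

lemma marginalVector_mem_basePolytope (hempty : f ∅ = 0) (hf : Supermodular f) (σ : Fin n ≃ ι) :
    marginalVector f σ ∈ basePolytope f := by
  refine ⟨?_, fun A => ?_⟩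
  · simpa [IsTight, initialSegment_self] using isTight_marginalVector hempty σ le_rfl
  induction A using Finset.induction_on_max_value σ.symm with
  | empty => simp [hempty]
  | insert a s ha hmax ih =>
    have hs : s ⊆ initialSegment σ (σ.symm a) := fun b hb =>
      mem_initialSegment.2 <| (hmax b hb).lt_of_ne <|
        σ.symm.injective.ne (ne_of_mem_of_not_mem hb ha)
    have hunion : insert a s ∪ initialSegment σ (σ.symm a) =
        initialSegment σ (σ.symm a + 1) := by
      rw [initialSegment_add_one, insert_union, union_eq_right.2 hs]
    have hinter : insert a s ∩ initialSegment σ (σ.symm a) = s := by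
      rw [insert_inter_of_notMem (by simp), inter_eq_left.2 hs]
    have hsuper := hf (insert a s) (initialSegment σ (σ.symm a))
    rw [hunion, hinter] at hsuper
    calc f (insert a s)
        ≤ marginalVector f σ a + f s := by
          rwa [marginalVector, sub_add_eq_add_sub, le_sub_iff_add_le]
      _ ≤ marginalVector f σ a + ∑ i ∈ s, marginalVector f σ i := by gcongr
      _ = ∑ i ∈ insert a s, marginalVector f σ i := (sum_insert ha).symm

lemma Supermodular.isTight_union_and_inter (hf : Supermodular f) (hx : x ∈ basePolytope f)
    {A B : Finset ι} (hA : IsTight f x A) (hB : IsTight f x B) :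
    IsTight f x (A ∪ B) ∧ IsTight f x (A ∩ B) := by
  have hunion := hx.2 (A ∪ B)
  have hinter := hx.2 (A ∩ B)
  have hle : ∑ i ∈ A ∪ B, x i + ∑ i ∈ A ∩ B, x i ≤ f (A ∪ B) + f (A ∩ B) := by
    rw [sum_union_inter, hA, hB]
    exact hf A B
  have heq := le_antisymm (add_le_add hunion hinter) hle
  exact ((add_eq_add_iff_eq_and_eq hunion hinter).1 heq).imp Eq.symm Eq.symm

/-- The lattice of tight sets at a point of the base polytope of a supermodular function. -/
def tightSublattice (hf : Supermodular f) (hx : x ∈ basePolytope f) : Sublattice (Finset ι) where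
  carrier := {A | IsTight f x A}
  supClosed' _ hA _ hB := (hf.isTight_union_and_inter hx hA hB).1
  infClosed' _ hA _ hB := (hf.isTight_union_and_inter hx hA hB).2

end BasePolytope

section ExtremePoints

variable {ι 𝕜 : Type*} [Fintype ι] [Field 𝕜] [LinearOrder 𝕜] [IsStrictOrderedRing 𝕜]
  {f : Finset ι → 𝕜} {x : ι → 𝕜} {n : ℕ}

lemma IsTight.of_mem_openSegment {y z : ι → 𝕜} {A : Finset ι} (hy : y ∈ basePolytope f)
    (hz : z ∈ basePolytope f) (hx : x ∈ openSegment 𝕜 y z) (hA : IsTight f x A) :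
    IsTight f y A := by
  obtain ⟨a, b, ha, hb, hab, rfl⟩ := hx
  have hsum : a * ∑ i ∈ A, y i + b * ∑ i ∈ A, z i = f A := by
    simpa [IsTight, sum_add_distrib, mul_sum] using hA
  have hle : a * ∑ i ∈ A, y i ≤ a * f A :=
    calc a * ∑ i ∈ A, y i = (a + b) * f A - b * ∑ i ∈ A, z i := by rw [hab, one_mul, ← hsum]; ring
      _ ≤ (a + b) * f A - b * f A := by gcongr; exact hz.2 A
      _ = a * f A := by ring
  exact le_antisymm (le_of_mul_le_mul_left hle ha) (hy.2 A)

lemma eq_zero_of_mem_extremePoints_of_add_mem_of_sub_mem {E : Type*} [AddCommGroup E] [Module 𝕜 E]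
    {s : Set E} {x d : E} (hx : x ∈ s.extremePoints 𝕜) (hadd : x + d ∈ s) (hsub : x - d ∈ s) :
    d = 0 := by
  have hmid : x ∈ openSegment 𝕜 (x + d) (x - d) :=
    ⟨1 / 2, 1 / 2, by norm_num, by norm_num, by norm_num, by module⟩
  simpa using (mem_extremePoints_iff_left.1 hx).2 _ hadd _ hsub hmid

lemma add_single_sub_single_mem_basePolytope [DecidableEq ι] {i j : ι} {ε : 𝕜} (hε : 0 ≤ ε)
    (hx : x ∈ basePolytope f) (hslack : ∀ A, i ∉ A → j ∈ A → f A + ε ≤ ∑ k ∈ A, x k) :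
    x + (Pi.single i ε - Pi.single j ε) ∈ basePolytope f := by
  have hsum (A : Finset ι) : ∑ k ∈ A, (x + (Pi.single i ε - Pi.single j ε) : ι → 𝕜) k =
      ∑ k ∈ A, x k + ((if i ∈ A then ε else 0) - if j ∈ A then ε else 0) := by
    simp [sum_add_distrib, sum_sub_distrib]
  refine ⟨by rw [hsum]; simpa using hx.1, fun A => ?_⟩
  rw [hsum]
  have hA := hx.2 A
  have hAslack := hslack A
  split_ifs with hi hj hj <;> grind

theorem eq_of_forall_isTight_mem_iff {i j : ι} (hx : x ∈ (basePolytope f).extremePoints 𝕜)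
    (hij : ∀ A, IsTight f x A → (i ∈ A ↔ j ∈ A)) : i = j := by
  classical
  by_contra hne
  obtain ⟨ε, hε, hslack⟩ := Pi.exists_forall_pos_add_lt
    fun A : {A // f A < ∑ k ∈ A, x k} => A.2
  have hseparated (A : Finset ι) (hA : ¬(i ∈ A ↔ j ∈ A)) : f A + ε ≤ ∑ k ∈ A, x k :=
    (hslack ⟨A, (hx.1.2 A).lt_of_ne' fun h => hA (hij A h)⟩).le
  have hadd := add_single_sub_single_mem_basePolytope (i := i) (j := j) hε.le hx.1
    fun A hi hj => hseparated A (by simp [hi, hj])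
  have hsub := add_single_sub_single_mem_basePolytope (i := j) (j := i) hε.le hx.1
    fun A hj hi => hseparated A (by simp [hi, hj])
  rw [← neg_sub, ← sub_eq_add_neg] at hsub
  have hzero :=
    congrFun (eq_zero_of_mem_extremePoints_of_add_mem_of_sub_mem hx hadd hsub) i
  simp [hne, hε.ne'] at hzero

variable [DecidableEq ι]

lemma marginalVector_mem_extremePoints (hempty : f ∅ = 0) (hf : Supermodular f)
    (σ : Fin n ≃ ι) : marginalVector f σ ∈ (basePolytope f).extremePoints 𝕜 :=
  mem_extremePoints_iff_left.2 ⟨marginalVector_mem_basePolytope hempty hf σ, fun _ hy _ hz hseg =>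
    eq_marginalVector_of_isTight fun _ hk =>
      (isTight_marginalVector hempty σ hk).of_mem_openSegment hy hz hseg⟩

lemma exists_eq_marginalVector (hn : Fintype.card ι = n) (hempty : f ∅ = 0)
    (hf : Supermodular f) (hx : x ∈ (basePolytope f).extremePoints 𝕜) :
    ∃ σ : Fin n ≃ ι, marginalVector f σ = x := by
  have empty_mem : ∅ ∈ tightSublattice hf hx.1 := hempty.symm
  have univ_mem : univ ∈ tightSublattice hf hx.1 := hx.1.1
  obtain ⟨σ, hσ⟩ := exists_forall_initialSegment_mem_sublattice hn empty_mem univ_mem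
    fun i j => eq_of_forall_isTight_mem_iff hx
  exact ⟨σ, (eq_marginalVector_of_isTight fun k _ => hσ k).symm⟩

theorem extremePoints_basePolytope (hn : Fintype.card ι = n) (hempty : f ∅ = 0)
    (hf : Supermodular f) :
    (basePolytope f).extremePoints 𝕜 = Set.range fun σ : Fin n ≃ ι => marginalVector f σ :=
  Set.Subset.antisymm (fun _ => exists_eq_marginalVector hn hempty hf)
    (Set.range_subset_iff.2 (marginalVector_mem_extremePoints hempty hf))

end ExtremePoints

section Gaps

variable {G : Type*} [AddCommGroup G] [PartialOrder G] [IsOrderedAddMonoid G] {c : ℕ → G} {n : ℕ}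

lemma sub_le_sub_of_monotoneOn_gaps (hc : MonotoneOn (fun k => c (k + 1) - c k) (Set.Iio n))
    {a b d : ℕ} (hab : a ≤ b) (hbd : b + d ≤ n) : c (a + d) - c a ≤ c (b + d) - c b := by
  have telescope (m : ℕ) : c (m + d) - c m = ∑ k ∈ range d, (c (m + k + 1) - c (m + k)) :=
    (sum_range_sub (fun k => c (m + k)) d).symm
  rw [telescope, telescope]
  refine sum_le_sum fun k hk => ?_
  have hkd : k < d := mem_range.1 hk
  exact hc (Set.mem_Iio.2 (by omega)) (Set.mem_Iio.2 (by omega)) (by omega)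

lemma supermodular_comp_card {ι : Type*} [Fintype ι] [DecidableEq ι]
    (hc : MonotoneOn (fun k => c (k + 1) - c k) (Set.Iio (Fintype.card ι))) :
    Supermodular fun A : Finset ι => c #A := by
  intro A B
  have hA : #(A ∩ B) + #(A \ B) = #A := card_inter_add_card_sdiff A B
  have hunion : #B + #(A \ B) = #(A ∪ B) := by rw [add_comm, card_sdiff_add_card]
  have hgap := sub_le_sub_of_monotoneOn_gaps hc (card_le_card (inter_subset_right (s₁ := A)))
    (hunion.trans_le (card_le_univ _))
  rwa [hA, hunion, sub_le_sub_iff] at hgap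

end Gaps

section Doubling

variable {R : Type*} [CommRing R] [LinearOrder R] [IsStrictOrderedRing R] {c : ℕ → R} {n : ℕ}

lemma nonneg_of_two_mul_lt (hc0 : 0 ≤ c 0) (hc : ∀ k, k < n → 2 * c k < c (k + 1)) :
    ∀ k ≤ n, 0 ≤ c k
  | 0, _ => hc0
  | k + 1, hk => by linarith [nonneg_of_two_mul_lt hc0 hc k (by omega), hc k hk]

lemma strictMonoOn_gaps_of_two_mul_lt (hc0 : 0 ≤ c 0)
    (hc : ∀ k, k < n → 2 * c k < c (k + 1)) :
    StrictMonoOn (fun k => c (k + 1) - c k) (Set.Iio n) := by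
  refine strictMonoOn_of_lt_add_one Set.ordConnected_Iio fun k _ _ hk => ?_
  have hk' : k + 1 < n := hk
  have hnonneg := nonneg_of_two_mul_lt hc0 hc k (by omega)
  have hdouble := hc (k + 1) hk'
  linarith

end Doubling

section RoseJewel

variable {n : ℕ} {c : ℕ → ℝ}

lemma roseJewel_eq_basePolytope (hc0 : c 0 = 0) (hc1 : 0 ≤ c 1) (hcn : c n = 1) :
    roseJewel n c = basePolytope fun A : Finset (Fin n) => c #A := by
  ext x
  constructor
  · rintro ⟨-, hsum, hproper⟩
    refine ⟨by simpa [hcn] using hsum, fun A => ?_⟩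
    rcases A.eq_empty_or_nonempty with rfl | hA
    · simp [hc0]
    rcases eq_or_ne A univ with rfl | hA'
    · simp [hsum, hcn]
    exact hproper A hA hA'
  · rintro ⟨hsum, hle⟩
    exact ⟨fun i => hc1.trans (by simpa using hle {i}), by simpa [hcn] using hsum,
      fun A _ _ => hle A⟩

lemma roseVertex_eq_marginalVector (σ : Equiv.Perm (Fin n)) :
    roseVertex n c σ = marginalVector (fun A => c #A) σ := by
  funext i
  rw [marginalVector, card_initialSegment σ (σ.symm i).isLt,
    card_initialSegment σ (σ.symm i).isLt.le]
  rfl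

lemma roseVertex_injective (hc : Set.InjOn (fun k => c (k + 1) - c k) (Set.Iio n)) :
    Function.Injective (roseVertex n c) := by
  intro σ τ h
  refine Equiv.symm_bijective.injective (Equiv.ext fun i => Fin.ext ?_)
  exact hc (σ.symm i).isLt (τ.symm i).isLt (congrFun h i)

end RoseJewel

theorem extremePoints_roseJewel_general (n : ℕ) (c : ℕ → ℝ) (hc0 : c 0 = 0) (hc1 : 0 ≤ c 1)
    (hcn : c n = 1) (hc : MonotoneOn (fun k => c (k + 1) - c k) (Set.Iio n)) :
    Set.extremePoints ℝ (roseJewel n c) = Set.range (roseVertex n c) ∧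
      (StrictMonoOn (fun k => c (k + 1) - c k) (Set.Iio n) →
        Function.Injective (roseVertex n c)) := by
  refine ⟨?_, fun hstrict => roseVertex_injective hstrict.injOn⟩
  have hsuper : Supermodular fun A : Finset (Fin n) => c #A :=
    supermodular_comp_card (by simpa using hc)
  rw [roseJewel_eq_basePolytope hc0 hc1 hcn,
    extremePoints_basePolytope (Fintype.card_fin n) (by simpa using hc0) hsuper]
  exact congrArg Set.range (funext fun σ => (roseVertex_eq_marginalVector σ).symm)

/-- The extreme points of the jewel of a rose are exactly the `n!` points `v_σ`
indexed by the orderings of the petals. -/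
theorem extremePoints_roseJewel (n : ℕ) (hn : 1 ≤ n) (c : ℕ → ℝ)
    (hc0 : c 0 = 0) (hcn : c n = 1) (hc : ∀ k, k < n → 2 * c k < c (k + 1)) :
    Set.extremePoints ℝ (roseJewel n c) = Set.range (roseVertex n c) ∧
      Function.Injective (roseVertex n c) := by
  have hgaps := strictMonoOn_gaps_of_two_mul_lt hc0.ge hc
  have hc1 : 0 ≤ c 1 := nonneg_of_two_mul_lt hc0.ge hc 1 hn
  have hgeneral := extremePoints_roseJewel_general n c hc0 hc1 hcn hgaps.monotoneOn
  exact ⟨hgeneral.1, hgeneral.2 hgaps⟩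
end

section
/- Let y : Δ → ℝ satisfy y_i ≥ 0 for all i ∈ Δ and ∑_{i ∈ D} y_i ≥ c_D for every D ∈ 𝒞. If A, B ∈ 𝒞 satisfy ∑_{i ∈ A} y_i = c_A and ∑_{i ∈ B} y_i = c_B, then A ⊆ B or B ⊆ A. (Thus the set of truncation constraints that are tight at any point of the jewel is nested, i.e. forms a flag; this is the key step in the proof of Proposition 2.1 of the paper.) -/
/-!
Two incomparable tight constraints `A` and `B` would give
`c (A ∪ B) ≤ ∑ i ∈ A ∪ B, y i ≤ ∑ i ∈ A, y i + ∑ i ∈ B, y i = c A + c B`, against the strict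
superadditivity of `c`. The middle inequality discards the nonnegative sum over `A ∩ B`; in a
general join-semilattice, a subadditive function takes the place of `D ↦ ∑ i ∈ D, y i`.
-/

theorem sum_union_le_sum_add_sum {ι M : Type*} [DecidableEq ι] [AddCommMonoid M] [Preorder M]
    [AddLeftMono M] {y : ι → M} {A B : Finset ι} (hy : ∀ i ∈ A ∩ B, 0 ≤ y i) :
    ∑ i ∈ A ∪ B, y i ≤ ∑ i ∈ A, y i + ∑ i ∈ B, y i :=
  calc
    ∑ i ∈ A ∪ B, y i ≤ ∑ i ∈ A ∪ B, y i + ∑ i ∈ A ∩ B, y i :=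
      le_add_of_nonneg_right (Finset.sum_nonneg hy)
    _ = ∑ i ∈ A, y i + ∑ i ∈ B, y i := Finset.sum_union_inter

theorem tight_constraints_nested_general {α M : Type*} [SemilatticeSup α] [Add M] [Preorder M]
    {s : Set α} (hs : SupClosed s) {c f : α → M}
    (hc : ∀ a ∈ s, ∀ b ∈ s, a < a ⊔ b → b < a ⊔ b → c a + c b < c (a ⊔ b))
    (hf : ∀ a ∈ s, ∀ b ∈ s, f (a ⊔ b) ≤ f a + f b)
    (hcf : ∀ d ∈ s, c d ≤ f d) :
    IsChain (· ≤ ·) {a ∈ s | f a = c a} := by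
  rintro a ⟨ha, hfa⟩ b ⟨hb, hfb⟩ -
  by_contra! ⟨hab, hba⟩
  have hle : c (a ⊔ b) ≤ c a + c b :=
    calc
      c (a ⊔ b) ≤ f (a ⊔ b) := hcf _ (hs ha hb)
      _ ≤ f a + f b := hf a ha b hb
      _ = c a + c b := by rw [hfa, hfb]
  exact (hc a ha b hb (left_lt_sup.2 hba) (right_lt_sup.2 hab)).not_ge hle

/-- If the truncation constants satisfy `c A + c B < c (A ∪ B)` whenever `A` and `B`
are both proper subsets of `A ∪ B`, then the constraints that are tight at a point of
the jewel are nested: if `∑_{i ∈ A} y i = c A` and `∑_{i ∈ B} y i = c B` then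
`A ⊆ B` or `B ⊆ A`. -/
theorem tight_constraints_nested (m : ℕ) (hm : 1 ≤ m)
    (C : Set (Finset (Fin (m + 1))))
    (hC : ∀ A ∈ C, ∀ B ∈ C, A ∪ B ∈ C)
    (c : Finset (Fin (m + 1)) → ℝ)
    (hc : ∀ A ∈ C, ∀ B ∈ C, A ⊂ A ∪ B → B ⊂ A ∪ B → c A + c B < c (A ∪ B))
    (y : Fin (m + 1) → ℝ) (hy : ∀ i, 0 ≤ y i)
    (hyC : ∀ D ∈ C, c D ≤ ∑ i ∈ D, y i)
    (A : Finset (Fin (m + 1))) (hA : A ∈ C)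
    (B : Finset (Fin (m + 1))) (hB : B ∈ C)
    (hAeq : ∑ i ∈ A, y i = c A) (hBeq : ∑ i ∈ B, y i = c B) :
    A ⊆ B ∨ B ⊆ A :=
  (tight_constraints_nested_general (fun _ hD _ hE ↦ hC _ hD _ hE) hc
    (fun _ _ _ _ ↦ sum_union_le_sum_add_sum fun i _ ↦ hy i) hyC).total ⟨hA, hAeq⟩ ⟨hB, hBeq⟩
end

section
/- If y is an extreme point of the jewel J with y_i > 0 for every i ∈ Δ, then there is a strictly increasing chain A_1 ⊊ A_2 ⊊ ⋯ ⊊ A_m of elements of 𝒞 such that A_j has exactly j elements and ∑_{i ∈ A_j} y_i = c_{A_j} for every j = 1, …, m. (This is the content of the proof of Proposition 2.1 of the paper: a vertex of the jewel lying in the interior of the simplex meets at least m bounding hyperplanes, and the corresponding tight sets form a complete flag of subsets of Δ.) -/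
/-- The jewel `J(G)`: the standard simplex on `Δ = {0, …, m}` truncated by the
constraints `∑_{i ∈ D} x i ≥ c D` for `D` in the collection `𝒞` of core subsets. -/
def jewel (m : ℕ) (C : Set (Finset (Fin (m + 1))))
    (c : Finset (Fin (m + 1)) → ℝ) : Set (Fin (m + 1) → ℝ) :=
  {x | (∀ i, 0 ≤ x i) ∧ (∑ i, x i = 1) ∧ ∀ D ∈ C, c D ≤ ∑ i ∈ D, x i}

/-!
Call `D ∈ C` *tight* at `y` if `∑ i ∈ D, y i = c D`. If two tight sets `A`, `B` were incomparable,
the superadditivity of `c` would give `∑_A y + ∑_B y < ∑_{A ∪ B} y`, contradicting `y ≥ 0`; hence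
the tight sets form a chain. They separate the points of the support of `y`: if every tight set
contains both or neither of `p ≠ q`, then `y ± ε (e_p - e_q)` stays in the jewel for small `ε`,
so `y` is not extreme.

A chain separating the points of `s` has a member meeting `s` in exactly `k` points whenever
`0 < k < |s|`. Otherwise let `L` be the last member meeting `s` in fewer than `k` points and `U`
the first one meeting it in more than `k`. Then `U \ L` contains two points of `s`, and no member
separates them.
-/

open Finset Filter Topology

section Chain

variable {α : Type*} {T : Set (Finset α)} {p : α → Prop} [DecidablePred p] {A B : Finset α}

lemma filter_subset_filter_of_isChain_of_card_le (hT : IsChain (· ⊆ ·) T) (hA : A ∈ T)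
    (hB : B ∈ T) (h : #{i ∈ A | p i} ≤ #{i ∈ B | p i}) :
    {i ∈ A | p i} ⊆ {i ∈ B | p i} := by
  rcases hT.total hA hB with hAB | hBA
  · exact filter_subset_filter p hAB
  · exact (eq_of_subset_of_card_le (filter_subset_filter p hBA) h).ge

lemma ssubset_of_isChain_of_card_filter_lt (hT : IsChain (· ⊆ ·) T) (hA : A ∈ T) (hB : B ∈ T)
    (h : #{i ∈ A | p i} < #{i ∈ B | p i}) : A ⊂ B := by
  have hBA : ¬B ⊆ A := fun hBA => h.not_ge (card_le_card (filter_subset_filter p hBA))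
  exact ⟨(hT.total hA hB).resolve_right hBA, hBA⟩

lemma exists_card_filter_eq_of_isChain_of_separates [Fintype α] (hT : IsChain (· ⊆ ·) T)
    (hsep : ∀ a b, p a → p b → (∀ D ∈ T, a ∈ D ↔ b ∈ D) → a = b)
    {k : ℕ} (hk₀ : 0 < k) (hk : k < #{i | p i}) : ∃ D ∈ T, #{i ∈ D | p i} = k := by
  classical
  by_contra! hne
  let T' : Set (Finset α) := insert univ (insert ∅ T)
  have hT' : IsChain (· ⊆ ·) T' :=
    (hT.insert fun D _ _ => .inl (empty_subset D)).insert fun D _ _ => .inr (subset_univ D)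
  obtain ⟨L, ⟨hLT, hLk⟩, hLmax⟩ := Set.exists_max_image {D ∈ T' | #{i ∈ D | p i} < k}
    (fun D => #{i ∈ D | p i}) (Set.toFinite _) ⟨∅, by simp [T'], by simpa using hk₀⟩
  obtain ⟨U, ⟨hUT, hUk⟩, hUmin⟩ := Set.exists_min_image {D ∈ T' | k < #{i ∈ D | p i}}
    (fun D => #{i ∈ D | p i}) (Set.toFinite _) ⟨univ, by simp [T'], hk⟩
  have hgap : 1 < #({i ∈ U | p i} \ {i ∈ L | p i}) := by
    have := le_card_sdiff {i ∈ L | p i} {i ∈ U | p i}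
    omega
  obtain ⟨a, ha, b, hb, hab⟩ := one_lt_card.1 hgap
  obtain ⟨haU, haL⟩ := Finset.mem_sdiff.1 ha
  obtain ⟨hbU, hbL⟩ := Finset.mem_sdiff.1 hb
  have hpa : p a := (mem_filter.1 haU).2
  have hpb : p b := (mem_filter.1 hbU).2
  refine hab (hsep a b hpa hpb fun D hD => ?_)
  have hDT : D ∈ T' := .inr (.inr hD)
  rcases (hne D hD).lt_or_gt with hlt | hgt
  · have hDL := filter_subset_filter_of_isChain_of_card_le hT' hDT hLT (hLmax D ⟨hDT, hlt⟩)
    exact iff_of_false (fun haD => haL (hDL (mem_filter.2 ⟨haD, hpa⟩)))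
      fun hbD => hbL (hDL (mem_filter.2 ⟨hbD, hpb⟩))
  · have hUD := filter_subset_filter_of_isChain_of_card_le hT' hUT hDT (hUmin D ⟨hDT, hgt⟩)
    exact iff_of_true (mem_filter.1 (hUD haU)).1 (mem_filter.1 (hUD hbU)).1

lemma exists_flag_of_isChain_of_separates [Fintype α] (hT : IsChain (· ⊆ ·) T)
    (hsep : ∀ a b, p a → p b → (∀ D ∈ T, a ∈ D ↔ b ∈ D) → a = b)
    {n : ℕ} (hn : #{i | p i} = n + 1) :
    ∃ A : Fin n → Finset α, (∀ j, A j ∈ T ∧ #{i ∈ A j | p i} = (j : ℕ) + 1) ∧ StrictMono A := by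
  choose A hAT hAcard using fun j : Fin n =>
    exists_card_filter_eq_of_isChain_of_separates hT hsep (Nat.succ_pos j) (by omega)
  exact ⟨A, fun j => ⟨hAT j, hAcard j⟩, fun j k hjk =>
    ssubset_of_isChain_of_card_filter_lt (p := p) hT (hAT j) (hAT k) (by simpa [hAcard] using hjk)⟩

end Chain

section Perturbation

variable {𝕜 : Type*} [Field 𝕜] [LinearOrder 𝕜] [IsStrictOrderedRing 𝕜] [TopologicalSpace 𝕜]
  [OrderTopology 𝕜]

lemma eq_zero_of_mem_extremePoints_of_eventually_add_smul_mem {E : Type*} [AddCommGroup E]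
    [Module 𝕜 E] {S : Set E} {y v : E} (hy : y ∈ S.extremePoints 𝕜)
    (h : ∀ᶠ ε : 𝕜 in 𝓝 0, y + ε • v ∈ S) : v = 0 := by
  have hneg : ∀ᶠ ε : 𝕜 in 𝓝 0, y + (-ε) • v ∈ S :=
    (continuous_neg.tendsto' (0 : 𝕜) 0 neg_zero).eventually h
  obtain ⟨ε, ⟨hadd, hsub⟩, hε⟩ :=
    (((h.and hneg).filter_mono nhdsWithin_le_nhds).and (self_mem_nhdsWithin (s := {0}ᶜ))).exists
  have hmid : y ∈ openSegment 𝕜 (y + ε • v) (y + (-ε) • v) :=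
    ⟨1 / 2, 1 / 2, by norm_num, by norm_num, by norm_num, by module⟩
  have hεv : ε • v = 0 := add_eq_left.1 (hy.2 hadd hsub hmid)
  exact (smul_eq_zero.1 hεv).resolve_left hε

lemma eventually_le_add_mul_of_le {b s t : 𝕜} (hbs : b ≤ s) (ht : s = b → t = 0) :
    ∀ᶠ ε in 𝓝 0, b ≤ s + ε * t := by
  rcases hbs.eq_or_lt with heq | hlt
  · simp [ht heq.symm, hbs]
  · have hcont : Tendsto (fun ε => s + ε * t) (𝓝 0) (𝓝 s) :=
      Continuous.tendsto' (by fun_prop) _ _ (by simp)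
    exact (hcont.eventually_const_lt hlt).mono fun _ => le_of_lt

end Perturbation

section TightSets

variable {α R : Type*} [AddCommMonoid R]

/-- The members `D` of `C` that are tight at `y`: the point `y` lies on the bounding hyperplane
`∑_{i ∈ D} x i = c D`. -/
def tightSets (C : Set (Finset α)) (c : Finset α → R) (y : α → R) : Set (Finset α) :=
  {D ∈ C | ∑ i ∈ D, y i = c D}

lemma isChain_tightSets [DecidableEq α] [PartialOrder R] [IsOrderedAddMonoid R]
    {C : Set (Finset α)} {c : Finset α → R} {y : α → R} (hy : ∀ i, 0 ≤ y i)
    (h : ∀ A ∈ C, ∀ B ∈ C, ¬A ⊆ B → ¬B ⊆ A → c A + c B < ∑ i ∈ A ∪ B, y i) :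
    IsChain (· ⊆ ·) (tightSets C c y) := by
  rintro A ⟨hA, hAc⟩ B ⟨hB, hBc⟩ -
  by_contra! hAB
  have hle : ∑ i ∈ A ∪ B, y i ≤ c A + c B := calc
    ∑ i ∈ A ∪ B, y i ≤ ∑ i ∈ A ∪ B, y i + ∑ i ∈ A ∩ B, y i :=
      le_add_of_nonneg_right (sum_nonneg fun i _ => hy i)
    _ = c A + c B := by rw [sum_union_inter, hAc, hBc]
  exact (h A hA B hB hAB.1 hAB.2).not_ge hle

end TightSets

section Jewel

variable {m : ℕ} {C : Set (Finset (Fin (m + 1)))} {c : Finset (Fin (m + 1)) → ℝ}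
  {y : Fin (m + 1) → ℝ}

lemma add_lt_sum_union_of_mem_jewel
    (hCunion : ∀ A ∈ C, ∀ B ∈ C, A ∪ B ≠ univ → A ∪ B ∈ C)
    (hc : ∀ A ∈ C, ∀ B ∈ C, A ∪ B ∈ C → A ⊂ A ∪ B → B ⊂ A ∪ B → c A + c B < c (A ∪ B))
    (hc' : ∀ A ∈ C, ∀ B ∈ C, A ∪ B = univ → ¬A ⊆ B → ¬B ⊆ A → c A + c B < 1)
    (hy : y ∈ jewel m C c) {A B : Finset (Fin (m + 1))} (hA : A ∈ C) (hB : B ∈ C)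
    (hAB : ¬A ⊆ B) (hBA : ¬B ⊆ A) : c A + c B < ∑ i ∈ A ∪ B, y i := by
  obtain ⟨-, hsum, hle⟩ := hy
  by_cases hU : A ∪ B = univ
  · simpa [hU, hsum] using hc' A hA B hB hU hAB hBA
  · have hUC := hCunion A hA B hB hU
    have hA_lt : A ⊂ A ∪ B := left_lt_sup.2 hBA
    have hB_lt : B ⊂ A ∪ B := right_lt_sup.2 hAB
    exact (hc A hA B hB hUC hA_lt hB_lt).trans_le (hle _ hUC)

lemma eventually_add_smul_mem_jewel (hy : y ∈ jewel m C c) {v : Fin (m + 1) → ℝ}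
    (hv₀ : ∀ i, y i = 0 → v i = 0) (hv : ∑ i, v i = 0)
    (hvt : ∀ D ∈ tightSets C c y, ∑ i ∈ D, v i = 0) :
    ∀ᶠ ε : ℝ in 𝓝 0, y + ε • v ∈ jewel m C c := by
  obtain ⟨hnonneg, hsum, hle⟩ := hy
  have hcoord : ∀ᶠ ε : ℝ in 𝓝 0, ∀ i, 0 ≤ y i + ε * v i :=
    eventually_all.2 fun i => eventually_le_add_mul_of_le (hnonneg i) (hv₀ i)
  have htrunc : ∀ᶠ ε : ℝ in 𝓝 0, ∀ D ∈ C, c D ≤ ∑ i ∈ D, y i + ε * ∑ i ∈ D, v i :=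
    (eventually_all_finite C.toFinite).2 fun D hD =>
      eventually_le_add_mul_of_le (hle D hD) fun htight => hvt D ⟨hD, htight⟩
  filter_upwards [hcoord, htrunc] with ε hcoord htrunc
  refine ⟨hcoord, ?_, fun D hD => ?_⟩
  · simp [sum_add_distrib, ← mul_sum, hsum, hv]
  · simpa [sum_add_distrib, ← mul_sum] using htrunc D hD

lemma eq_of_forall_mem_tightSets_iff (hy : y ∈ (jewel m C c).extremePoints ℝ)
    {p q : Fin (m + 1)} (hp : y p ≠ 0) (hq : y q ≠ 0)
    (h : ∀ D ∈ tightSets C c y, p ∈ D ↔ q ∈ D) : p = q := by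
  by_contra hpq
  have hv : Pi.single p 1 - Pi.single q 1 = (0 : Fin (m + 1) → ℝ) := by
    refine eq_zero_of_mem_extremePoints_of_eventually_add_smul_mem hy
      (eventually_add_smul_mem_jewel hy.1 (fun i hi => ?_) (by simp) fun D hD => ?_)
    · have hip : i ≠ p := by rintro rfl; exact hp hi
      have hiq : i ≠ q := by rintro rfl; exact hq hi
      simp [hip, hiq]
    · simp [sum_sub_distrib, h D hD]
  simpa [hpq] using congrFun hv p

theorem extremePoint_interior_flag_general
    (hCunion : ∀ A ∈ C, ∀ B ∈ C, A ∪ B ≠ univ → A ∪ B ∈ C)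
    (hc : ∀ A ∈ C, ∀ B ∈ C, A ∪ B ∈ C → A ⊂ A ∪ B → B ⊂ A ∪ B → c A + c B < c (A ∪ B))
    (hc' : ∀ A ∈ C, ∀ B ∈ C, A ∪ B = univ → ¬A ⊆ B → ¬B ⊆ A → c A + c B < 1)
    (hy : y ∈ (jewel m C c).extremePoints ℝ) {n : ℕ} (hn : #{i | y i ≠ 0} = n + 1) :
    ∃ A : Fin n → Finset (Fin (m + 1)),
      (∀ j, A j ∈ C ∧ #{i ∈ A j | y i ≠ 0} = (j : ℕ) + 1 ∧ ∑ i ∈ A j, y i = c (A j)) ∧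
      ∀ j k, j < k → A j ⊂ A k := by
  have hchain : IsChain (· ⊆ ·) (tightSets C c y) :=
    isChain_tightSets hy.1.1 fun A hA B hB =>
      add_lt_sum_union_of_mem_jewel hCunion hc hc' hy.1 hA hB
  obtain ⟨A, hA, hmono⟩ := exists_flag_of_isChain_of_separates hchain
    (fun _ _ hp hq => eq_of_forall_mem_tightSets_iff hy hp hq) hn
  exact ⟨A, fun j => ⟨(hA j).1.1, (hA j).2, (hA j).1.2⟩, fun _ _ hjk => hmono hjk⟩

end Jewel

/-- An extreme point of the jewel with all coordinates positive lies on a complete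
flag of tight truncation constraints: there is a strictly increasing chain
`A 0 ⊊ A 1 ⊊ ⋯ ⊊ A (m-1)` of members of `𝒞` with `|A j| = j + 1` and
`∑_{i ∈ A j} y i = c (A j)` for every `j`. -/
theorem extremePoint_interior_flag (m : ℕ) (hm : 1 ≤ m)
    (C : Set (Finset (Fin (m + 1))))
    (hCne : ∀ A ∈ C, A.Nonempty) (hCprop : ∀ A ∈ C, A ≠ Finset.univ)
    (hCunion : ∀ A ∈ C, ∀ B ∈ C, A ∪ B ≠ Finset.univ → A ∪ B ∈ C)
    (c : Finset (Fin (m + 1)) → ℝ)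
    (hc : ∀ A ∈ C, ∀ B ∈ C, A ∪ B ∈ C → A ⊂ A ∪ B → B ⊂ A ∪ B →
      c A + c B < c (A ∪ B))
    (hc' : ∀ A ∈ C, ∀ B ∈ C, A ∪ B = Finset.univ → ¬A ⊆ B → ¬B ⊆ A →
      c A + c B < 1)
    (y : Fin (m + 1) → ℝ)
    (hy : y ∈ Set.extremePoints ℝ (jewel m C c))
    (hypos : ∀ i, 0 < y i) :
    ∃ A : Fin m → Finset (Fin (m + 1)),
      (∀ j, A j ∈ C ∧ (A j).card = (j : ℕ) + 1 ∧ ∑ i ∈ A j, y i = c (A j)) ∧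
      (∀ j k : Fin m, j < k → A j ⊂ A k) := by
  have hy₀ : ∀ i, y i ≠ 0 := fun i => (hypos i).ne'
  simpa [hy₀] using extremePoint_interior_flag_general (n := m) hCunion hc hc' hy (by simp [hy₀])
end
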